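/- A ρ-maximal-correlation secure cipher is (t,ε)-Rényi-entropy-constrained secure with ε = 2^{(n−t)/2}·ρ: if ρ_m(M;C) ≤ ρ when M is uniform on [1:2ⁿ], then for every pmf p̂ on [1:2ⁿ] with Rényi entropy H₂(p̂) = −log₂ Σ_m p̂(m)² ≥ t, every f: [1:2ⁿ] → ℕ, and every guess f̃: 𝒞 → ℕ, the advantage ℙ̂{f(M)=f̃(C)} − max_i ℙ̂{f(M)=i} is at most 2^{(n−t)/2}·ρ, where ℙ̂ is the joint law of (M,C) when M ∼ p̂ is encrypted by the same cipher. -/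

import Mathlib

open BigOperators Finset
open scoped Classical

/-- Hirschfeld–Gebelein–Rényi maximal correlation of a joint pmf `p` on `X × Y`:
the supremum of `E[f(X) g(Y)]` over zero-mean, unit-second-moment `f`, `g`
(`sSup ∅ = 0` if no such functions exist). -/
noncomputable def maxCorr {X Y : Type*} [Fintype X] [Fintype Y] (p : X → Y → ℝ) : ℝ :=
  sSup {r : ℝ | ∃ f : X → ℝ, ∃ g : Y → ℝ,
    (∑ x, ∑ y, p x y * f x) = 0 ∧
    (∑ x, ∑ y, p x y * g y) = 0 ∧
    (∑ x, ∑ y, p x y * (f x) ^ 2) = 1 ∧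
    (∑ x, ∑ y, p x y * (g y) ^ 2) = 1 ∧
    r = ∑ x, ∑ y, p x y * f x * g y}

/-- Spectral (operator) norm of a real matrix. -/
noncomputable def specNorm {X Y : Type*} [Fintype X] [Fintype Y] (B : Matrix X Y ℝ) : ℝ :=
  sSup {r : ℝ | ∃ v : Y → ℝ, (∑ y, (v y) ^ 2) = 1 ∧
    r = Real.sqrt (∑ x, (B.mulVec v x) ^ 2)}

/-!
Let `p` be the joint law of `(M, C)` under a reference law `μ` of `M`, and let `r = q / μ`.
Reweighting `p` by `r` gives the joint law under the message law `q`, so the probability of a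
correct guess is `∑ i, E[r 1{f = i} · 1{g = i}]`, while an independent guess contributes the
products of the means. The difference is a sum of covariances of a function of `M` and a function of
`C`. Each of them is at most `maxCorr p` times the product of the `L²` norms, and Cauchy–Schwarz
over `i` sums these products up to `√E[r²] = √(χ²(q‖μ) + 1)`, because the indicators `1{g = i}` have
total squared norm `1`. For uniform `μ` this is `2 ^ ((log₂ |X| - H₂(q)) / 2)`.
-/

section JointExpectation

variable {X Y : Type*} [Fintype X] [Fintype Y] {p : X → Y → ℝ}

/-- The expectation functional of a weight `p` on `X × Y`, as a linear map on functions of two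
variables; it is the mean of `h (M, C)` when `p` is the joint pmf of `(M, C)`. -/
def jointExpect (p : X → Y → ℝ) : (X → Y → ℝ) →ₗ[ℝ] ℝ where
  toFun h := ∑ x, ∑ y, p x y * h x y
  map_add' h k := by simp only [Pi.add_apply, mul_add, sum_add_distrib]
  map_smul' a h := by
    simp only [Pi.smul_apply, smul_eq_mul, mul_left_comm _ a, ← mul_sum, RingHom.id_apply]

lemma jointExpect_apply (p h : X → Y → ℝ) :
    jointExpect p h = ∑ x, ∑ y, p x y * h x y := rfl

lemma jointExpect_nonneg (hp : ∀ x y, 0 ≤ p x y) {h : X → Y → ℝ} (hh : ∀ x y, 0 ≤ h x y) :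
    0 ≤ jointExpect p h :=
  sum_nonneg fun x _ => sum_nonneg fun y _ => mul_nonneg (hp x y) (hh x y)

lemma jointExpect_mono (hp : ∀ x y, 0 ≤ p x y) {h k : X → Y → ℝ} (hhk : ∀ x y, h x y ≤ k x y) :
    jointExpect p h ≤ jointExpect p k :=
  sum_le_sum fun x _ => sum_le_sum fun y _ => mul_le_mul_of_nonneg_left (hhk x y) (hp x y)

lemma sq_jointExpect_mul_le (hp : ∀ x y, 0 ≤ p x y) (h k : X → Y → ℝ) :
    jointExpect p (h * k) ^ 2 ≤ jointExpect p (h ^ 2) * jointExpect p (k ^ 2) := by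
  simp only [jointExpect_apply, ← Fintype.sum_prod_type']
  refine sum_sq_le_sum_mul_sum_of_sq_le_mul _ (fun z _ => ?_) (fun z _ => ?_) fun z _ => ?_
  · exact mul_nonneg (hp _ _) (sq_nonneg _)
  · exact mul_nonneg (hp _ _) (sq_nonneg _)
  · simp only [Pi.mul_apply, Pi.pow_apply]
    exact le_of_eq (by ring)

/-- The covariance of two functions on `X × Y` under the joint pmf `p`. -/
def jointCov (p h k : X → Y → ℝ) : ℝ :=
  jointExpect p (h * k) - jointExpect p h * jointExpect p k

lemma jointExpect_const (hp1 : jointExpect p 1 = 1) (a : ℝ) : (jointExpect p fun _ _ => a) = a := by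
  have const_eq : (fun _ _ => a : X → Y → ℝ) = a • 1 := by
    ext x y
    simp
  rw [const_eq, map_smul, hp1, smul_eq_mul, mul_one]

lemma jointExpect_centered (hp1 : jointExpect p 1 = 1) (h : X → Y → ℝ) :
    jointExpect p (h - fun _ _ => jointExpect p h) = 0 := by
  rw [map_sub, jointExpect_const hp1, sub_self]

lemma jointExpect_centered_mul_centered (hp1 : jointExpect p 1 = 1) (h k : X → Y → ℝ) :
    jointExpect p ((h - fun _ _ => jointExpect p h) * (k - fun _ _ => jointExpect p k)) =
      jointCov p h k := by
  have expand (a b : ℝ) : (h - fun _ _ => a) * (k - fun _ _ => b) =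
      h * k - b • h - a • k + fun _ _ => a * b := by
    ext x y
    simp only [Pi.mul_apply, Pi.sub_apply, Pi.add_apply, Pi.smul_apply, smul_eq_mul]
    ring
  simp only [expand, map_add, map_sub, map_smul, jointExpect_const hp1, smul_eq_mul, jointCov]
  ring

lemma jointExpect_centered_sq_le (hp1 : jointExpect p 1 = 1) (h : X → Y → ℝ) :
    jointExpect p ((h - fun _ _ => jointExpect p h) ^ 2) ≤ jointExpect p (h ^ 2) := by
  rw [sq, jointExpect_centered_mul_centered hp1, jointCov, ← sq, ← sq]
  exact sub_le_self _ (sq_nonneg _)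

end JointExpectation

section MaxCorr

variable {X Y : Type*} [Fintype X] [Fintype Y] {p : X → Y → ℝ}

lemma maxCorr_nonneg (p : X → Y → ℝ) : 0 ≤ maxCorr p := by
  by_cases hne : ∃ u : X → ℝ, ∃ v : Y → ℝ, (∑ x, ∑ y, p x y * u x) = 0 ∧
      (∑ x, ∑ y, p x y * v y) = 0 ∧ (∑ x, ∑ y, p x y * u x ^ 2) = 1 ∧
      (∑ x, ∑ y, p x y * v y ^ 2) = 1
  · obtain ⟨u, v, hu, hv, hu2, hv2⟩ := hne
    apply Real.sSup_nonneg'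
    obtain hr | hr := le_total 0 (∑ x, ∑ y, p x y * u x * v y)
    · exact ⟨_, ⟨u, v, hu, hv, hu2, hv2, rfl⟩, hr⟩
    · exact ⟨_, ⟨-u, v, by simpa using hu, hv, by simpa using hu2, hv2, rfl⟩, by simpa using hr⟩
  · apply Real.sSup_nonneg
    rintro r ⟨u, v, hu, hv, hu2, hv2, -⟩
    exact absurd ⟨u, v, hu, hv, hu2, hv2⟩ hne

lemma jointExpect_mul_le_maxCorr (hp : ∀ x y, 0 ≤ p x y) {u : X → ℝ} {v : Y → ℝ}
    (hu : (jointExpect p fun x _ => u x) = 0) (hv : (jointExpect p fun _ y => v y) = 0)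
    (hu2 : (jointExpect p fun x _ => u x ^ 2) = 1)
    (hv2 : (jointExpect p fun _ y => v y ^ 2) = 1) :
    (jointExpect p fun x y => u x * v y) ≤ maxCorr p := by
  refine le_csSup ⟨1, ?_⟩ ⟨u, v, hu, hv, hu2, hv2, by simp only [jointExpect_apply, mul_assoc]⟩
  rintro _ ⟨f, g, -, -, hf, hg, rfl⟩
  have cauchy_schwarz := sq_jointExpect_mul_le hp (fun x _ => f x) (fun _ y => g y)
  simp only [jointExpect_apply, Pi.mul_apply, Pi.pow_apply, hf, hg, ← mul_assoc, mul_one]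
    at cauchy_schwarz
  exact le_of_abs_le ((sq_le_one_iff_abs_le_one _).1 cauchy_schwarz)

lemma jointExpect_mul_le_of_centered (hp : ∀ x y, 0 ≤ p x y) {u : X → ℝ} {v : Y → ℝ}
    (hu : (jointExpect p fun x _ => u x) = 0) (hv : (jointExpect p fun _ y => v y) = 0) :
    (jointExpect p fun x y => u x * v y) ≤
      maxCorr p * (√(jointExpect p fun x _ => u x ^ 2) * √(jointExpect p fun _ y => v y ^ 2)) := by
  set a := jointExpect p fun x _ => u x ^ 2
  set b := jointExpect p fun _ y => v y ^ 2
  have ha : 0 ≤ a := jointExpect_nonneg hp fun _ _ => sq_nonneg _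
  have hb : 0 ≤ b := jointExpect_nonneg hp fun _ _ => sq_nonneg _
  obtain hab | hab := eq_or_ne (√a * √b) 0
  · have cauchy_schwarz : (jointExpect p fun x y => u x * v y) ^ 2 ≤ a * b :=
      sq_jointExpect_mul_le hp (fun x _ => u x) (fun _ y => v y)
    rw [hab, mul_zero]
    refine (Real.le_sqrt_of_sq_le cauchy_schwarz).trans_eq ?_
    rw [Real.sqrt_mul ha, hab]
  have hsa : √a ≠ 0 := left_ne_zero_of_mul hab
  have hsb : √b ≠ 0 := right_ne_zero_of_mul hab
  have scale (c : ℝ) (h : X → Y → ℝ) : (jointExpect p fun x y => c * h x y) = c * jointExpect p h :=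
    map_smul (jointExpect p) c h
  have normalized : (jointExpect p fun x y => (√a)⁻¹ * u x * ((√b)⁻¹ * v y)) ≤ maxCorr p := by
    apply jointExpect_mul_le_maxCorr hp
    · rw [scale, hu, mul_zero]
    · rw [scale, hv, mul_zero]
    · simp only [mul_pow]
      rw [scale, inv_pow, Real.sq_sqrt ha, inv_mul_cancel₀ (Real.sqrt_ne_zero'.1 hsa).ne']
    · simp only [mul_pow]
      rw [scale, inv_pow, Real.sq_sqrt hb, inv_mul_cancel₀ (Real.sqrt_ne_zero'.1 hsb).ne']
  have factor : (jointExpect p fun x y => (√a)⁻¹ * u x * ((√b)⁻¹ * v y)) =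
      (√a * √b)⁻¹ * jointExpect p fun x y => u x * v y := by
    rw [← scale]
    congr 1
    ext x y
    ring
  rwa [factor, inv_mul_le_iff₀ (by positivity), mul_comm (√a * √b)] at normalized

lemma jointCov_le_maxCorr_mul (hp : ∀ x y, 0 ≤ p x y) (hp1 : jointExpect p 1 = 1)
    (u : X → ℝ) (v : Y → ℝ) :
    jointCov p (fun x _ => u x) (fun _ y => v y) ≤
      maxCorr p * (√(jointExpect p fun x _ => u x ^ 2) * √(jointExpect p fun _ y => v y ^ 2)) := by
  set a := jointExpect p fun x _ => u x
  set b := jointExpect p fun _ y => v y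
  have mean_u : (jointExpect p fun x _ => u x - a) = 0 :=
    jointExpect_centered hp1 fun x _ => u x
  have mean_v : (jointExpect p fun _ y => v y - b) = 0 :=
    jointExpect_centered hp1 fun _ y => v y
  have second_moment_u : (jointExpect p fun x _ => (u x - a) ^ 2) ≤
      jointExpect p fun x _ => u x ^ 2 :=
    jointExpect_centered_sq_le hp1 fun x _ => u x
  have second_moment_v : (jointExpect p fun _ y => (v y - b) ^ 2) ≤
      jointExpect p fun _ y => v y ^ 2 :=
    jointExpect_centered_sq_le hp1 fun _ y => v y
  calc jointCov p (fun x _ => u x) (fun _ y => v y)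
    _ = jointExpect p fun x y => (u x - a) * (v y - b) :=
        (jointExpect_centered_mul_centered hp1 _ _).symm
    _ ≤ maxCorr p * (√(jointExpect p fun x _ => (u x - a) ^ 2) *
          √(jointExpect p fun _ y => (v y - b) ^ 2)) :=
        jointExpect_mul_le_of_centered hp mean_u mean_v
    _ ≤ _ := by
        have := maxCorr_nonneg p
        gcongr

lemma abs_jointCov_le_maxCorr_mul (hp : ∀ x y, 0 ≤ p x y) (hp1 : jointExpect p 1 = 1)
    (u : X → ℝ) (v : Y → ℝ) :
    |jointCov p (fun x _ => u x) (fun _ y => v y)| ≤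
      maxCorr p * (√(jointExpect p fun x _ => u x ^ 2) * √(jointExpect p fun _ y => v y ^ 2)) := by
  have neg_left : jointCov p (fun x _ => -u x) (fun _ y => v y) =
      -jointCov p (fun x _ => u x) (fun _ y => v y) := by
    change jointCov p (-fun x _ => u x) _ = _
    simp only [jointCov, neg_mul, map_neg]
    ring
  refine abs_le'.2 ⟨jointCov_le_maxCorr_mul hp hp1 u v, ?_⟩
  simpa only [neg_left, neg_sq] using jointCov_le_maxCorr_mul hp hp1 (fun x => -u x) v

lemma abs_sum_jointCov_le_maxCorr_mul {ι : Type*} (hp : ∀ x y, 0 ≤ p x y)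
    (hp1 : jointExpect p 1 = 1) (s : Finset ι) (u : ι → X → ℝ) (v : ι → Y → ℝ) :
    |∑ i ∈ s, jointCov p (fun x _ => u i x) (fun _ y => v i y)| ≤
      maxCorr p * (√(∑ i ∈ s, jointExpect p fun x _ => u i x ^ 2) *
        √(∑ i ∈ s, jointExpect p fun _ y => v i y ^ 2)) :=
  calc |∑ i ∈ s, jointCov p (fun x _ => u i x) (fun _ y => v i y)|
    _ ≤ ∑ i ∈ s, |jointCov p (fun x _ => u i x) (fun _ y => v i y)| := abs_sum_le_sum_abs _ _
    _ ≤ ∑ i ∈ s, maxCorr p * (√(jointExpect p fun x _ => u i x ^ 2) *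
          √(jointExpect p fun _ y => v i y ^ 2)) :=
        sum_le_sum fun i _ => abs_jointCov_le_maxCorr_mul hp hp1 (u i) (v i)
    _ ≤ _ := by
        rw [← mul_sum]
        refine mul_le_mul_of_nonneg_left ?_ (maxCorr_nonneg p)
        exact Real.sum_sqrt_mul_sqrt_le s
          (fun i => jointExpect_nonneg hp fun _ _ => sq_nonneg _)
          (fun i => jointExpect_nonneg hp fun _ _ => sq_nonneg _)

lemma abs_jointExpect_eq_sub_le_maxCorr_mul {ι : Type*} [DecidableEq ι]
    (hp : ∀ x y, 0 ≤ p x y) (hp1 : jointExpect p 1 = 1) (r : X → ℝ) (f : X → ι) (g : Y → ι) :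
    |(jointExpect p fun x y => if f x = g y then r x else 0) -
        ∑ i ∈ univ.image g, (jointExpect p fun x _ => if f x = i then r x else 0) *
          jointExpect p fun _ y => if g y = i then 1 else 0| ≤
      maxCorr p * √(jointExpect p fun x _ => r x ^ 2) := by
  let u : ι → X → ℝ := fun i x => if f x = i then r x else 0
  let v : ι → Y → ℝ := fun i y => if g y = i then 1 else 0
  have mem_image (y : Y) : g y ∈ univ.image g := mem_image_of_mem g (mem_univ y)
  have match_eq_sum : (jointExpect p fun x y => if f x = g y then r x else 0) =
      ∑ i ∈ univ.image g, jointExpect p ((fun x _ => u i x) * fun _ y => v i y) := by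
    rw [← map_sum]
    congr 1
    ext x y
    simp [u, v, Finset.sum_apply, mem_image]
  have sum_u_sq_le : (∑ i ∈ univ.image g, jointExpect p fun x _ => u i x ^ 2) ≤
      jointExpect p fun x _ => r x ^ 2 := by
    rw [← map_sum]
    refine jointExpect_mono hp fun x y => ?_
    simp only [u, Finset.sum_apply, ite_pow, zero_pow two_ne_zero, sum_ite_eq]
    split_ifs
    exacts [le_rfl, sq_nonneg _]
  have sum_v_sq : (∑ i ∈ univ.image g, jointExpect p fun _ y => v i y ^ 2) = 1 := by
    rw [← map_sum, ← hp1]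
    congr 1
    ext x y
    simp [v, Finset.sum_apply, mem_image]
  have bound := abs_sum_jointCov_le_maxCorr_mul hp hp1 (univ.image g) u v
  simp only [jointCov, sum_sub_distrib, ← match_eq_sum, sum_v_sq, Real.sqrt_one, mul_one] at bound
  exact bound.trans (mul_le_mul_of_nonneg_left (Real.sqrt_le_sqrt sum_u_sq_le) (maxCorr_nonneg p))

end MaxCorr

section Divergence

variable {X : Type*} [Fintype X] {q μ : X → ℝ}

/-- The `χ²`-divergence of `q` from `μ`. Points with `μ x = 0` contribute `0`, so this is the
usual notion only when `q` vanishes wherever `μ` does. -/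
noncomputable def chiSqDiv (q μ : X → ℝ) : ℝ :=
  ∑ x, (q x - μ x) ^ 2 / μ x

/-- The Rényi entropy of order two, in bits. -/
noncomputable def renyiEntropyTwo (q : X → ℝ) : ℝ :=
  -Real.logb 2 (∑ x, q x ^ 2)

lemma chiSqDiv_add_one (hq : ∑ x, q x = 1) (hμ : ∑ x, μ x = 1) (hqμ : ∀ x, μ x = 0 → q x = 0) :
    chiSqDiv q μ + 1 = ∑ x, q x ^ 2 / μ x := by
  have expand (x : X) : (q x - μ x) ^ 2 / μ x = q x ^ 2 / μ x - 2 * q x + μ x := by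
    obtain hx | hx := eq_or_ne (μ x) 0
    · simp [hx, hqμ x hx]
    · field_simp
      ring
  simp only [chiSqDiv, expand, sum_add_distrib, sum_sub_distrib, ← mul_sum, hq, hμ]
  ring

lemma chiSqDiv_uniform_add_one (hq : ∑ x, q x = 1) :
    chiSqDiv q (fun _ => (Fintype.card X : ℝ)⁻¹) + 1 =
      2 ^ (Real.logb 2 (Fintype.card X) - renyiEntropyTwo q) := by
  obtain ⟨x₀, -, hx₀⟩ : ∃ x ∈ univ, q x ≠ 0 := exists_ne_zero_of_sum_ne_zero (by simp [hq])
  have : Nonempty X := ⟨x₀⟩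
  have uniform : (fun _ : X => (Fintype.card X : ℝ)⁻¹) ∈ stdSimplex ℝ X :=
    stdSimplex.barycenter.2
  have card_pos : (0 : ℝ) < Fintype.card X := by exact_mod_cast Fintype.card_pos
  have sum_sq_pos : 0 < ∑ x, q x ^ 2 :=
    sum_pos' (fun x _ => sq_nonneg (q x)) ⟨x₀, mem_univ x₀, by positivity⟩
  rw [chiSqDiv_add_one hq uniform.2 fun _ h => absurd h (by positivity), renyiEntropyTwo,
    sub_neg_eq_add, Real.rpow_add two_pos, Real.rpow_logb two_pos (by norm_num) card_pos,
    Real.rpow_logb two_pos (by norm_num) sum_sq_pos, mul_sum]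
  exact sum_congr rfl fun x _ => by rw [div_inv_eq_mul, mul_comm]

end Divergence

section Kernel

variable {X Y ι : Type*} [Fintype X] [Fintype Y]

/-- The joint law of input and output when an input of law `μ` is passed through the kernel `W`. -/
def jointLaw (μ : X → ℝ) (W : X → Y → ℝ) (x : X) (y : Y) : ℝ :=
  μ x * W x y

/-- The law of the output when an input of law `μ` is passed through the kernel `W`. -/
def outputLaw (μ : X → ℝ) (W : X → Y → ℝ) (y : Y) : ℝ :=
  ∑ x, jointLaw μ W x y

/-- The probability that `f` takes the value `i` under the pmf `q`. -/
def fiberMass [DecidableEq ι] (q : X → ℝ) (f : X → ι) (i : ι) : ℝ :=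
  ∑ x, if f x = i then q x else 0

variable {μ q : X → ℝ} {W : X → Y → ℝ}

lemma jointExpect_jointLaw_fst (hW : ∀ x, ∑ y, W x y = 1) (h : X → ℝ) :
    (jointExpect (jointLaw μ W) fun x _ => h x) = ∑ x, μ x * h x := by
  simp only [jointExpect_apply, jointLaw, ← sum_mul, ← mul_sum, hW, mul_one]

lemma jointExpect_jointLaw_snd (h : Y → ℝ) :
    (jointExpect (jointLaw μ W) fun _ y => h y) = ∑ y, outputLaw μ W y * h y := by
  simp only [jointExpect_apply, outputLaw, sum_mul]
  exact sum_comm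

lemma outputLaw_mem_stdSimplex (hμ : μ ∈ stdSimplex ℝ X) (hW : ∀ x, W x ∈ stdSimplex ℝ Y) :
    outputLaw μ W ∈ stdSimplex ℝ Y := by
  refine ⟨fun y => sum_nonneg fun x _ => mul_nonneg (hμ.1 x) ((hW x).1 y), ?_⟩
  simp only [outputLaw, jointLaw]
  rw [sum_comm, ← hμ.2]
  exact sum_congr rfl fun x _ => by rw [← mul_sum, (hW x).2, mul_one]

variable [DecidableEq ι]

lemma abs_jointExpect_eq_sub_le_chiSqDiv (hμ : μ ∈ stdSimplex ℝ X)
    (hW : ∀ x, W x ∈ stdSimplex ℝ Y) (hq : ∑ x, q x = 1) (hqμ : ∀ x, μ x = 0 → q x = 0)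
    (f : X → ι) (g : Y → ι) :
    |(jointExpect (jointLaw q W) fun x y => if f x = g y then 1 else 0) -
        ∑ i ∈ univ.image g, fiberMass q f i * fiberMass (outputLaw μ W) g i| ≤
      maxCorr (jointLaw μ W) * √(chiSqDiv q μ + 1) := by
  have hW1 (x : X) : ∑ y, W x y = 1 := (hW x).2
  have mul_ratio (x : X) : μ x * (q x / μ x) = q x := mul_div_cancel_of_imp' (hqμ x)
  have total : jointExpect (jointLaw μ W) 1 = 1 :=
    (jointExpect_jointLaw_fst hW1 1).trans <| by simp [hμ.2]
  have match_eq : (jointExpect (jointLaw μ W) fun x y => if f x = g y then q x / μ x else 0) =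
      jointExpect (jointLaw q W) fun x y => if f x = g y then 1 else 0 := by
    simp only [jointExpect_apply, jointLaw, mul_ite, mul_zero, mul_one, mul_right_comm _ (W _ _),
      mul_ratio]
  have left_eq (i : ι) :
      (jointExpect (jointLaw μ W) fun x _ => if f x = i then q x / μ x else 0) =
        fiberMass q f i := by
    rw [jointExpect_jointLaw_fst hW1 fun x => if f x = i then q x / μ x else 0]
    simp only [mul_ite, mul_ratio, mul_zero, fiberMass]
  have right_eq (i : ι) :
      (jointExpect (jointLaw μ W) fun _ y => if g y = i then 1 else 0) =
        fiberMass (outputLaw μ W) g i := by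
    rw [jointExpect_jointLaw_snd fun y => if g y = i then 1 else 0]
    simp only [mul_ite, mul_one, mul_zero, fiberMass]
  have second_moment :
      (jointExpect (jointLaw μ W) fun x _ => (q x / μ x) ^ 2) = chiSqDiv q μ + 1 := by
    rw [jointExpect_jointLaw_fst hW1 fun x => (q x / μ x) ^ 2, chiSqDiv_add_one hq hμ.2 hqμ]
    exact sum_congr rfl fun x _ => by rw [sq, ← mul_assoc, mul_ratio, sq, mul_div_assoc]
  simpa only [match_eq, left_eq, right_eq, second_moment] using
    abs_jointExpect_eq_sub_le_maxCorr_mul (p := jointLaw μ W)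
      (fun x y => mul_nonneg (hμ.1 x) ((hW x).1 y)) total (fun x => q x / μ x) f g

lemma fiberMass_le_iSup (hq : ∀ x, 0 ≤ q x) (f : X → ι) (i : ι) :
    fiberMass q f i ≤ ⨆ j, fiberMass q f j := by
  refine le_ciSup ⟨∑ x, q x, ?_⟩ i
  rintro _ ⟨j, rfl⟩
  refine sum_le_sum fun x _ => ?_
  split_ifs
  exacts [le_rfl, hq x]

lemma sum_fiberMass_mul_fiberMass_le_iSup {ν : Y → ℝ} (hq : ∀ x, 0 ≤ q x)
    (hν : ν ∈ stdSimplex ℝ Y) (f : X → ι) (g : Y → ι) :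
    ∑ i ∈ univ.image g, fiberMass q f i * fiberMass ν g i ≤ ⨆ i, fiberMass q f i := by
  have fiberMass_nonneg (i : ι) : 0 ≤ fiberMass ν g i :=
    sum_nonneg fun y _ => ite_nonneg (hν.1 y) le_rfl
  have sum_fiberMass : ∑ i ∈ univ.image g, fiberMass ν g i = 1 := by
    simp only [fiberMass]
    rw [sum_comm, ← hν.2]
    simp
  calc ∑ i ∈ univ.image g, fiberMass q f i * fiberMass ν g i
    _ ≤ ∑ i ∈ univ.image g, (⨆ j, fiberMass q f j) * fiberMass ν g i :=
        sum_le_sum fun i _ => mul_le_mul_of_nonneg_right (fiberMass_le_iSup hq f i)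
          (fiberMass_nonneg i)
    _ = ⨆ i, fiberMass q f i := by rw [← mul_sum, sum_fiberMass, mul_one]

theorem stmt14_general (hW : ∀ x, W x ∈ stdSimplex ℝ Y) {ρ : ℝ}
    (hρ : maxCorr (jointLaw (fun _ => (Fintype.card X : ℝ)⁻¹) W) ≤ ρ)
    (hq : q ∈ stdSimplex ℝ X) {t : ℝ} (ht : t ≤ renyiEntropyTwo q) (f : X → ι) (g : Y → ι) :
    (jointExpect (jointLaw q W) fun x y => if f x = g y then 1 else 0) -
        ⨆ i, fiberMass q f i ≤
      2 ^ ((Real.logb 2 (Fintype.card X) - t) / 2) * ρ := by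
  have : Nonempty X := (nonempty_of_sum_ne_zero (hq.2.trans_ne one_ne_zero)).to_type
  have uniform : (fun _ : X => (Fintype.card X : ℝ)⁻¹) ∈ stdSimplex ℝ X :=
    stdSimplex.barycenter.2
  have advantage := (le_abs_self _).trans <| abs_jointExpect_eq_sub_le_chiSqDiv uniform hW hq.2
    (fun _ h => absurd h (by positivity)) f g
  have independent := sum_fiberMass_mul_fiberMass_le_iSup hq.1
    (outputLaw_mem_stdSimplex uniform hW) f g
  have divergence : √(chiSqDiv q (fun _ => (Fintype.card X : ℝ)⁻¹) + 1) ≤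
      2 ^ ((Real.logb 2 (Fintype.card X) - t) / 2) := by
    rw [chiSqDiv_uniform_add_one hq.2, Real.sqrt_eq_rpow, ← Real.rpow_mul zero_le_two]
    exact Real.rpow_le_rpow_of_exponent_le one_le_two (by linarith)
  have := mul_le_mul hρ divergence (Real.sqrt_nonneg _) ((maxCorr_nonneg _).trans hρ)
  linarith

end Kernel

section Cipher

variable {K X C : Type*} [Fintype K]

/-- The kernel `p_{C|M}` of the cipher `E` under a uniform key: the law of `E K m`. -/
noncomputable def cipherKernel (E : K → X → C) (m : X) (c : C) : ℝ :=
  (Fintype.card K : ℝ)⁻¹ * (univ.filter fun k => E k m = c).card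

lemma cipherKernel_mem_stdSimplex [Nonempty K] [Fintype C] (E : K → X → C) (m : X) :
    cipherKernel E m ∈ stdSimplex ℝ C := by
  refine ⟨fun c => by unfold cipherKernel; positivity, ?_⟩
  have card_eq := card_eq_sum_card_fiberwise (f := fun k => E k m) (s := univ) (t := univ)
    fun _ _ => by simp
  simp only [cipherKernel, ← mul_sum, ← Nat.cast_sum, ← card_eq, card_univ]
  exact inv_mul_cancel₀ (by simp)

end Cipher

theorem stmt14 (n : ℕ) {C K : Type*} [Fintype C] [Fintype K] [Nonempty K]
    (E : K → Fin (2 ^ n) → C) (ρ : ℝ)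
    (hρ : maxCorr (fun (m : Fin (2 ^ n)) (c : C) =>
        ((2 ^ n : ℝ))⁻¹ * ((Fintype.card K : ℝ))⁻¹ *
          ((univ.filter fun k => E k m = c).card : ℝ)) ≤ ρ)
    (phat : Fin (2 ^ n) → ℝ) (hphat : ∀ m, 0 ≤ phat m) (hphat1 : ∑ m, phat m = 1)
    (t : ℝ) (ht : t ≤ -Real.logb 2 (∑ m, (phat m) ^ 2))
    (f : Fin (2 ^ n) → ℕ) (ftilde : C → ℕ) :
    (∑ m, ∑ c, phat m * (((Fintype.card K : ℝ))⁻¹ *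
        ((univ.filter fun k => E k m = c).card : ℝ)) *
        (if f m = ftilde c then 1 else 0)) -
      (⨆ i : ℕ, ∑ m, if f m = i then phat m else 0) ≤
    (2 : ℝ) ^ (((n : ℝ) - t) / 2) * ρ := by
  simpa [jointExpect_apply, jointLaw, fiberMass, cipherKernel, Real.logb_pow] using
    stmt14_general (cipherKernel_mem_stdSimplex E) (ρ := ρ)
      (by simpa +unfoldPartialApp [jointLaw, cipherKernel, mul_assoc] using hρ)
      ⟨hphat, hphat1⟩ ht f ftilde
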